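/- Let n ≥ 2, p > 1 not an even integer, and let f ∈ L^∞(S^{n-1}) be a positive function (f ≥ c > 0 a.e.). Then H(x) = (∫_{S^{n-1}} |⟨x,ξ⟩|^p f(ξ) dξ)^{1/p} is the support function of a centrally symmetric convex body of class C^2_+, i.e., whose boundary is C^2 with everywhere positive Gauss–Kronecker curvature. -/

import Mathlib

open MeasureTheory Real Set Metric
open scoped RealInnerProductSpace ENNReal MeasureTheory

noncomputable section

/-! `H ^ p` is a superposition of the ridge functions `x ↦ |⟪x, ξ⟫| ^ p` weighted by `ν = f dξ`.
The second derivative of `|r| ^ p` is singular at `0` when `p < 2`, but only integrably so, and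
since `f` is bounded the law of `⟪x, ·⟫` under `ν` has bounded density near `0`, locally uniformly
in `x ≠ 0`. Cutting the singularity off therefore changes the Hessian integrals by an amount that
tends to `0` locally uniformly, which makes `H ^ p` of class `C²` away from the origin with the
Hessian given by the expected absolutely convergent integral. That Hessian is positive definite,
and applying the Cauchy–Schwarz inequality to it yields `⟪(d∇H)_u v, v⟫ > 0` whenever `v` is not a
multiple of `u`. Finally `H` is a norm by Minkowski's inequality, hence the support function of
its dual unit ball.
-/

namespace LpCosine

open Filter Topology
open Module (finrank finrank_pos)
open scoped NNReal

section Cutoff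

/-- A continuous even cutoff vanishing for `(n + 1) * |r| ≤ 1` and equal to `1` for
`2 ≤ (n + 1) * |r|`; multiplying by it removes a singularity at the origin. -/
def zeroCutoff (n : ℕ) (r : ℝ) : ℝ := max 0 (min 1 ((n + 1) * |r| - 1))

/-- The `L¹` norm of `w` on the interval where `zeroCutoff n` differs from `1`. -/
def cutoffError (w : ℝ → ℝ) (n : ℕ) : ℝ := ∫ r in Icc (-(2 / (n + 1 : ℝ))) (2 / (n + 1)), |w r|

variable {w : ℝ → ℝ} {n : ℕ} {r : ℝ}

lemma continuous_zeroCutoff (n : ℕ) : Continuous (zeroCutoff n) := by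
  unfold zeroCutoff
  fun_prop

lemma zeroCutoff_nonneg (n : ℕ) (r : ℝ) : 0 ≤ zeroCutoff n r := le_max_left _ _

lemma zeroCutoff_le_one (n : ℕ) (r : ℝ) : zeroCutoff n r ≤ 1 :=
  max_le zero_le_one (min_le_left _ _)

lemma zeroCutoff_eq_zero (h : (n + 1) * |r| ≤ 1) : zeroCutoff n r = 0 :=
  max_eq_left ((min_le_right _ _).trans (by linarith))

lemma zeroCutoff_eq_one (h : 2 ≤ (n + 1) * |r|) : zeroCutoff n r = 1 := by
  rw [zeroCutoff, min_eq_left (by linarith), max_eq_right zero_le_one]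

lemma continuous_zeroCutoff_mul (hw : ContinuousOn w {0}ᶜ) (n : ℕ) :
    Continuous fun r => zeroCutoff n r * w r := by
  refine continuous_iff_continuousAt.2 fun r => ?_
  rcases eq_or_ne r 0 with rfl | hr
  · have hsmall : ∀ᶠ r : ℝ in 𝓝 0, (n + 1) * |r| < 1 :=
      ContinuousAt.eventually_lt (by fun_prop) continuousAt_const (by simp)
    exact (continuousAt_const (y := (0 : ℝ))).congr
      (hsmall.mono fun r hr => by simp [zeroCutoff_eq_zero hr.le])
  · exact (continuous_zeroCutoff n).continuousAt.mul
      (hw.continuousAt (isOpen_compl_singleton.mem_nhds hr))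

lemma abs_zeroCutoff_mul_sub_le (w : ℝ → ℝ) (n : ℕ) (r : ℝ) :
    |zeroCutoff n r * w r - w r| ≤
      (Icc (-(2 / (n + 1 : ℝ))) (2 / (n + 1))).indicator (fun r => |w r|) r := by
  by_cases hr : r ∈ Icc (-(2 / (n + 1 : ℝ))) (2 / (n + 1))
  · rw [indicator_of_mem hr, ← sub_one_mul, abs_mul]
    refine mul_le_of_le_one_left (abs_nonneg _) (abs_le.2 ⟨?_, ?_⟩) <;>
      linarith [zeroCutoff_nonneg n r, zeroCutoff_le_one n r]
  · have hlarge : 2 < (n + 1) * |r| := by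
      rw [mem_Icc, ← abs_le, not_le, div_lt_iff₀' (by positivity)] at hr
      exact hr
    rw [indicator_of_notMem hr, zeroCutoff_eq_one hlarge.le, one_mul, sub_self, abs_zero]

lemma tendsto_cutoffError (hw : LocallyIntegrable w) :
    Tendsto (cutoffError w) atTop (𝓝 0) := by
  set s : ℕ → Set ℝ := fun n => Icc (-(2 / (n + 1 : ℝ))) (2 / (n + 1))
  have hs : Antitone s := fun m n hmn => by
    have : 2 / (n + 1 : ℝ) ≤ 2 / (m + 1) := by gcongr
    exact Icc_subset_Icc (neg_le_neg this) this
  have hlim : Tendsto (fun n : ℕ => 2 / (n + 1 : ℝ)) atTop (𝓝 0) := by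
    simpa [div_eq_mul_inv] using (tendsto_one_div_add_atTop_nhds_zero_nat (𝕜 := ℝ)).const_mul 2
  have hInter : ⋂ n, s n ⊆ {0} := fun r hr => by
    refine abs_nonpos_iff.1 (ge_of_tendsto' hlim fun n => ?_)
    exact abs_le.2 (mem_iInter.1 hr n)
  have hzero : ∫ r in ⋂ n, s n, |w r| = 0 :=
    setIntegral_measure_zero _ (measure_mono_null hInter (measure_singleton 0))
  rw [← hzero]
  exact tendsto_setIntegral_of_antitone (fun _ => measurableSet_Icc) hs
    ⟨0, (hw.integrableOn_isCompact isCompact_Icc).abs⟩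

lemma abs_add_integral_zeroCutoff_mul_sub_le {k : ℝ → ℝ} (hk : Continuous k)
    (hkw : ∀ s ≠ 0, HasDerivAt k (w s) s) (hwc : ContinuousOn w {0}ᶜ) (hw : LocallyIntegrable w)
    (n : ℕ) (s : ℝ) :
    |k 0 + (∫ r in (0)..s, zeroCutoff n r * w r) - k s| ≤ cutoffError w n := by
  have hwi : IntervalIntegrable w volume 0 s :=
    (intervalIntegrable_iff').2 (hw.integrableOn_isCompact isCompact_uIcc)
  have hci : IntervalIntegrable (fun r => zeroCutoff n r * w r) volume 0 s :=
    (continuous_zeroCutoff_mul hwc n).intervalIntegrable 0 s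
  have hprim : ∫ r in (0)..s, w r = k s - k 0 :=
    integral_eq_of_hasDerivAt_off_countable k w (countable_singleton 0) hk.continuousOn
      (fun r hr => hkw r hr.2) hwi
  have hind : Integrable
      ((Icc (-(2 / (n + 1 : ℝ))) (2 / (n + 1))).indicator fun r => |w r|) :=
    (integrable_indicator_iff measurableSet_Icc).2
      (hw.integrableOn_isCompact isCompact_Icc).abs
  calc |k 0 + (∫ r in (0)..s, zeroCutoff n r * w r) - k s|
      = ‖∫ r in (0)..s, (zeroCutoff n r * w r - w r)‖ := by
        rw [intervalIntegral.integral_sub hci hwi, hprim, Real.norm_eq_abs]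
        congr 1
        ring
    _ ≤ ∫ r in uIoc 0 s, ‖zeroCutoff n r * w r - w r‖ :=
        intervalIntegral.norm_integral_le_integral_norm_uIoc
    _ ≤ ∫ r in uIoc 0 s, (Icc (-(2 / (n + 1 : ℝ))) (2 / (n + 1))).indicator (fun r => |w r|) r :=
        setIntegral_mono (hci.sub hwi).def'.norm hind.integrableOn
          (abs_zeroCutoff_mul_sub_le w n)
    _ ≤ ∫ r, (Icc (-(2 / (n + 1 : ℝ))) (2 / (n + 1))).indicator (fun r => |w r|) r :=
        setIntegral_le_integral hind
          (Eventually.of_forall (indicator_nonneg fun _ _ => abs_nonneg _))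
    _ = cutoffError w n := integral_indicator measurableSet_Icc

lemma restrict_Icc_le_smul_volume {μ : Measure ℝ} {C : ℝ≥0} {δ a : ℝ}
    (hC : μ.restrict (Icc (-δ) δ) ≤ C • volume) (ha : a ≤ δ) :
    μ.restrict (Icc (-a) a) ≤ C • volume.restrict (Icc (-a) a) := by
  have hsub : Icc (-a) a ⊆ Icc (-δ) δ := Icc_subset_Icc (neg_le_neg ha) ha
  rw [← Measure.restrict_restrict_of_subset hsub, ← Measure.restrict_smul]
  exact Measure.restrict_mono le_rfl hC

lemma eventually_two_div_le {δ : ℝ} (hδ : 0 < δ) : ∀ᶠ n : ℕ in atTop, 2 / (n + 1 : ℝ) ≤ δ := by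
  filter_upwards [eventually_ge_atTop ⌈2 / δ⌉₊] with n hn
  have : 2 / δ ≤ n := Nat.ceil_le.1 hn
  rw [div_le_iff₀ (by positivity)]
  rw [div_le_iff₀ hδ] at this
  linarith

end Cutoff

section RidgeIntegral

variable {E V : Type*} [NormedAddCommGroup E] [InnerProductSpace ℝ E]
  [NormedAddCommGroup V] [NormedSpace ℝ V]

/-- The coefficients of the derivative of a superposition of ridge functions, since
`x ↦ k ⟪x, ξ⟫ • T ξ` has derivative `v ↦ (k' ⟪x, ξ⟫ * ⟪ξ, v⟫) • T ξ`. -/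
def ridgeCoeff (T : E → V) (ξ : E) : E →L[ℝ] V := (innerSL ℝ ξ).smulRight (T ξ)

lemma continuous_ridgeCoeff {T : E → V} (hT : Continuous T) : Continuous (ridgeCoeff T) := by
  unfold ridgeCoeff
  fun_prop

variable [MeasurableSpace E]

/-- The superposition of the ridge functions `x ↦ k ⟪x, ξ⟫` with directions distributed
according to `ν` and coefficients `T ξ`. -/
def ridgeIntegral (ν : Measure E) (k : ℝ → ℝ) (T : E → V) (x : E) : V :=
  ∫ ξ, k ⟪x, ξ⟫ • T ξ ∂ν

/-- Near the origin, the law of `ξ ↦ ⟪x, ξ⟫` under `ν` has a density with respect to Lebesgue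
measure, bounded locally uniformly in `x ≠ 0`. -/
def HasBoundedMarginalsNearZero (ν : Measure E) : Prop :=
  ∀ x₀ : E, x₀ ≠ 0 → ∃ C : ℝ≥0, ∃ δ > 0, ∀ᶠ x in 𝓝 x₀,
    (ν.map fun ξ => ⟪x, ξ⟫).restrict (Icc (-δ) δ) ≤ C • volume

lemma HasBoundedMarginalsNearZero.mono {μ ν : Measure E} [OpensMeasurableSpace E]
    (hν : HasBoundedMarginalsNearZero ν) {M : ℝ≥0} (hμν : μ ≤ M • ν) :
    HasBoundedMarginalsNearZero μ := fun x₀ hx₀ => by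
  obtain ⟨C, δ, hδ, hC⟩ := hν x₀ hx₀
  refine ⟨M * C, δ, hδ, hC.mono fun x hx => ?_⟩
  calc (μ.map fun ξ => ⟪x, ξ⟫).restrict (Icc (-δ) δ)
      ≤ ((M • ν).map fun ξ => ⟪x, ξ⟫).restrict (Icc (-δ) δ) :=
        Measure.restrict_mono le_rfl (Measure.map_mono hμν (by fun_prop))
    _ = M • (ν.map fun ξ => ⟪x, ξ⟫).restrict (Icc (-δ) δ) := by
        rw [Measure.map_smul, Measure.restrict_smul]
    _ ≤ M • C • volume := by gcongr
    _ = (M * C) • volume := (mul_smul _ _ _).symm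

section Regular

variable [FiniteDimensional ℝ E] [BorelSpace E] {ν : Measure E} [IsFiniteMeasure ν] {s : Set E}
  {k k' : ℝ → ℝ} {T : E → V}

lemma integrable_ridge (hs : IsCompact s) (hν : ∀ᵐ ξ ∂ν, ξ ∈ s) (hk : Continuous k)
    (hT : Continuous T) (x : E) : Integrable (fun ξ => k ⟪x, ξ⟫ • T ξ) ν := by
  rw [← Measure.restrict_eq_self_of_ae_mem hν]
  exact ContinuousOn.integrableOn_compact hs (by fun_prop)

lemma continuous_ridgeIntegral (hs : IsCompact s) (hν : ∀ᵐ ξ ∂ν, ξ ∈ s) (hk : Continuous k)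
    (hT : Continuous T) : Continuous (ridgeIntegral ν k T) := by
  unfold ridgeIntegral
  rw [← Measure.restrict_eq_self_of_ae_mem hν]
  exact continuous_parametric_integral_of_continuous (by fun_prop) hs

lemma hasFDerivAt_ridgeIntegral (hs : IsCompact s) (hν : ∀ᵐ ξ ∂ν, ξ ∈ s)
    (hk : ∀ r, HasDerivAt k (k' r) r) (hk' : Continuous k') (hT : Continuous T) (x : E) :
    HasFDerivAt (ridgeIntegral ν k T) (ridgeIntegral ν k' (ridgeCoeff T) x) x := by
  have hkc : Continuous k := continuous_iff_continuousAt.2 fun r => (hk r).continuousAt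
  have hT' := continuous_ridgeCoeff hT
  have hcont : Continuous fun y : E × E => k' ⟪y.1, y.2⟫ • ridgeCoeff T y.2 := by fun_prop
  obtain ⟨M, hM⟩ := ((isCompact_closedBall x 1).prod hs).exists_bound_of_continuousOn
    hcont.continuousOn
  refine hasFDerivAt_integral_of_dominated_of_fderiv_le
    (F' := fun x ξ => k' ⟪x, ξ⟫ • ridgeCoeff T ξ) (bound := fun _ => M)
    (closedBall_mem_nhds x one_pos)
    (Eventually.of_forall fun y => (integrable_ridge hs hν hkc hT y).aestronglyMeasurable)
    (integrable_ridge hs hν hkc hT x) (integrable_ridge hs hν hk' hT' x).aestronglyMeasurable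
    (hν.mono fun ξ hξ y hy => hM (y, ξ) ⟨hy, hξ⟩) (integrable_const M)
    (Eventually.of_forall fun ξ y _ => ?_)
  have hinner : HasFDerivAt (fun y : E => ⟪y, ξ⟫) (innerSL ℝ ξ) y :=
    (innerSL ℝ ξ).hasFDerivAt.congr_of_eventuallyEq (.of_forall fun z => real_inner_comm ξ z)
  exact (((hk ⟪y, ξ⟫).comp_hasFDerivAt y hinner).smul_const (T ξ)).congr_fderiv
    (by ext v; simp [ridgeCoeff, mul_smul])

end Regular

section Singular

variable [FiniteDimensional ℝ E] [BorelSpace E] {ν : Measure E} {s : Set E}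
  {k w : ℝ → ℝ} {T : E → V} {x : E} {C : ℝ≥0} {δ : ℝ} {n : ℕ}

lemma integrable_indicator_Icc_inner
    (hC : (ν.map fun ξ => ⟪x, ξ⟫).restrict (Icc (-δ) δ) ≤ C • volume) {a : ℝ} (ha : a ≤ δ)
    {g : ℝ → ℝ} (hgi : IntegrableOn g (Icc (-a) a)) :
    Integrable (fun ξ => (Icc (-a) a).indicator g ⟪x, ξ⟫) ν := by
  have hmap : Integrable ((Icc (-a) a).indicator g) (ν.map fun ξ => ⟪x, ξ⟫) :=
    (integrable_indicator_iff measurableSet_Icc).2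
      ((hgi.smul_measure_nnreal (c := C)).mono_measure (restrict_Icc_le_smul_volume hC ha))
  exact hmap.comp_measurable (by fun_prop)

lemma integral_indicator_Icc_inner_le
    (hC : (ν.map fun ξ => ⟪x, ξ⟫).restrict (Icc (-δ) δ) ≤ C • volume) {a : ℝ} (ha : a ≤ δ)
    {g : ℝ → ℝ} (hg : Measurable g) (hg0 : 0 ≤ g) (hgi : IntegrableOn g (Icc (-a) a)) :
    ∫ ξ, (Icc (-a) a).indicator g ⟪x, ξ⟫ ∂ν ≤ C * ∫ r in Icc (-a) a, g r :=
  calc ∫ ξ, (Icc (-a) a).indicator g ⟪x, ξ⟫ ∂ν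
      = ∫ r, (Icc (-a) a).indicator g r ∂(ν.map fun ξ => ⟪x, ξ⟫) :=
        (integral_map (by fun_prop) (hg.indicator measurableSet_Icc).aestronglyMeasurable).symm
    _ = ∫ r in Icc (-a) a, g r ∂(ν.map fun ξ => ⟪x, ξ⟫) := integral_indicator measurableSet_Icc
    _ ≤ ∫ r, g r ∂(C • volume.restrict (Icc (-a) a)) :=
        integral_mono_measure (restrict_Icc_le_smul_volume hC ha) (.of_forall hg0)
          hgi.smul_measure_nnreal
    _ = C * ∫ r in Icc (-a) a, g r := integral_smul_nnreal_measure _ C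

lemma HasBoundedMarginalsNearZero.ae_inner_ne_zero (hB : HasBoundedMarginalsNearZero ν)
    (hx : x ≠ 0) : ∀ᵐ ξ ∂ν, ⟪x, ξ⟫ ≠ 0 := by
  obtain ⟨C, δ, hδ, hC⟩ := hB x hx
  have hle := hC.self_of_nhds {0}
  rw [Measure.restrict_apply (measurableSet_singleton 0),
    inter_eq_self_of_subset_left (by simpa using hδ.le),
    Measure.map_apply (by fun_prop) (measurableSet_singleton 0)] at hle
  exact ae_iff.2 (by simpa [preimage] using hle)

lemma integrable_zeroCutoff_mul_sub
    (hC : (ν.map fun ξ => ⟪x, ξ⟫).restrict (Icc (-δ) δ) ≤ C • volume) (hn : 2 / (n + 1 : ℝ) ≤ δ)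
    (hwc : ContinuousOn w {0}ᶜ) (hw : LocallyIntegrable w) :
    Integrable (fun ξ => zeroCutoff n ⟪x, ξ⟫ * w ⟪x, ξ⟫ - w ⟪x, ξ⟫) ν := by
  have hwm : Measurable w := measurable_of_continuousOn_compl_singleton 0 hwc
  have hcm : Measurable (zeroCutoff n) := (continuous_zeroCutoff n).measurable
  refine (integrable_indicator_Icc_inner hC hn
    (hw.integrableOn_isCompact isCompact_Icc).norm).mono' (by fun_prop)
    (.of_forall fun ξ => abs_zeroCutoff_mul_sub_le w n ⟪x, ξ⟫)

lemma integral_abs_zeroCutoff_mul_sub_le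
    (hC : (ν.map fun ξ => ⟪x, ξ⟫).restrict (Icc (-δ) δ) ≤ C • volume) (hn : 2 / (n + 1 : ℝ) ≤ δ)
    (hwc : ContinuousOn w {0}ᶜ) (hw : LocallyIntegrable w) :
    ∫ ξ, |zeroCutoff n ⟪x, ξ⟫ * w ⟪x, ξ⟫ - w ⟪x, ξ⟫| ∂ν ≤ C * cutoffError w n := by
  have hwm : Measurable w := measurable_of_continuousOn_compl_singleton 0 hwc
  have hwi := (hw.integrableOn_isCompact (isCompact_Icc (a := -(2 / (n + 1 : ℝ)))
    (b := 2 / (n + 1)))).abs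
  exact (integral_mono (integrable_zeroCutoff_mul_sub hC hn hwc hw).abs
    (integrable_indicator_Icc_inner hC hn hwi)
    fun ξ => abs_zeroCutoff_mul_sub_le w n ⟪x, ξ⟫).trans
    (integral_indicator_Icc_inner_le hC hn hwm.abs (fun _ => abs_nonneg _) hwi)

variable [IsFiniteMeasure ν]

lemma integrable_ridge_of_locallyIntegrable (hs : IsCompact s) (hν : ∀ᵐ ξ ∂ν, ξ ∈ s)
    (hB : HasBoundedMarginalsNearZero ν) (hwc : ContinuousOn w {0}ᶜ) (hw : LocallyIntegrable w)
    (hT : Continuous T) (hx : x ≠ 0) : Integrable (fun ξ => w ⟪x, ξ⟫ • T ξ) ν := by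
  obtain ⟨C, δ, hδ, hC⟩ := hB x hx
  obtain ⟨n, hn⟩ := (eventually_two_div_le hδ).exists
  obtain ⟨M, hM⟩ := hs.exists_bound_of_continuousOn hT.continuousOn
  have herr := (integrable_zeroCutoff_mul_sub hC.self_of_nhds hn hwc hw).smul_bdd (f := T) M
    hT.aestronglyMeasurable (hν.mono hM)
  refine ((integrable_ridge hs hν (continuous_zeroCutoff_mul hwc n) hT x).sub herr).congr
    (.of_forall fun ξ => ?_)
  simp [← sub_smul]

lemma norm_ridgeIntegral_zeroCutoff_sub_le (hs : IsCompact s) (hν : ∀ᵐ ξ ∂ν, ξ ∈ s)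
    (hB : HasBoundedMarginalsNearZero ν) (hwc : ContinuousOn w {0}ᶜ) (hw : LocallyIntegrable w)
    (hT : Continuous T) {M : ℝ} (hM0 : 0 ≤ M) (hM : ∀ ξ ∈ s, ‖T ξ‖ ≤ M) (hx : x ≠ 0)
    (hC : (ν.map fun ξ => ⟪x, ξ⟫).restrict (Icc (-δ) δ) ≤ C • volume) (hn : 2 / (n + 1 : ℝ) ≤ δ) :
    ‖ridgeIntegral ν (fun r => zeroCutoff n r * w r) T x - ridgeIntegral ν w T x‖ ≤
      C * cutoffError w n * M := by
  have hi := integrable_zeroCutoff_mul_sub hC hn hwc hw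
  calc ‖ridgeIntegral ν (fun r => zeroCutoff n r * w r) T x - ridgeIntegral ν w T x‖
      = ‖∫ ξ, (zeroCutoff n ⟪x, ξ⟫ * w ⟪x, ξ⟫ - w ⟪x, ξ⟫) • T ξ ∂ν‖ := by
        simp only [ridgeIntegral, sub_smul]
        rw [integral_sub (integrable_ridge hs hν (continuous_zeroCutoff_mul hwc n) hT x)
          (integrable_ridge_of_locallyIntegrable hs hν hB hwc hw hT hx)]
    _ ≤ ∫ ξ, |zeroCutoff n ⟪x, ξ⟫ * w ⟪x, ξ⟫ - w ⟪x, ξ⟫| * M ∂ν :=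
        norm_integral_le_of_norm_le (hi.abs.mul_const M) (hν.mono fun ξ hξ => by
          rw [norm_smul]
          exact mul_le_mul_of_nonneg_left (hM ξ hξ) (abs_nonneg _))
    _ ≤ C * cutoffError w n * M := by
        rw [integral_mul_const]
        exact mul_le_mul_of_nonneg_right (integral_abs_zeroCutoff_mul_sub_le hC hn hwc hw) hM0

lemma tendstoLocallyUniformlyOn_ridgeIntegral_zeroCutoff (hs : IsCompact s)
    (hν : ∀ᵐ ξ ∂ν, ξ ∈ s) (hB : HasBoundedMarginalsNearZero ν) (hwc : ContinuousOn w {0}ᶜ)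
    (hw : LocallyIntegrable w) (hT : Continuous T) :
    TendstoLocallyUniformlyOn (fun n : ℕ => ridgeIntegral ν (fun r => zeroCutoff n r * w r) T)
      (ridgeIntegral ν w T) atTop {0}ᶜ := by
  obtain ⟨M, hM0, hM⟩ := (hs.image hT).isBounded.exists_pos_norm_le
  rw [forall_mem_image] at hM
  refine Metric.tendstoLocallyUniformlyOn_iff.2 fun ε hε x₀ hx₀ => ?_
  obtain ⟨C, δ, hδ, hC⟩ := hB x₀ hx₀
  have herr : Tendsto (fun n => C * cutoffError w n * M) atTop (𝓝 0) := by
    simpa using ((tendsto_cutoffError hw).const_mul (C : ℝ)).mul_const M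
  refine ⟨{x | (ν.map fun ξ => ⟪x, ξ⟫).restrict (Icc (-δ) δ) ≤ C • volume} ∩ {0}ᶜ,
    inter_mem (nhdsWithin_le_nhds hC) self_mem_nhdsWithin, ?_⟩
  filter_upwards [herr.eventually_lt_const hε, eventually_two_div_le hδ] with n hnε hnδ x hx
  rw [dist_comm, dist_eq_norm]
  exact (norm_ridgeIntegral_zeroCutoff_sub_le hs hν hB hwc hw hT hM0.le hM hx.2 hx.1
    hnδ).trans_lt hnε

lemma continuousOn_ridgeIntegral_of_locallyIntegrable (hs : IsCompact s)
    (hν : ∀ᵐ ξ ∂ν, ξ ∈ s) (hB : HasBoundedMarginalsNearZero ν) (hwc : ContinuousOn w {0}ᶜ)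
    (hw : LocallyIntegrable w) (hT : Continuous T) :
    ContinuousOn (ridgeIntegral ν w T) {0}ᶜ :=
  (tendstoLocallyUniformlyOn_ridgeIntegral_zeroCutoff hs hν hB hwc hw hT).continuousOn
    (.of_forall fun n =>
      (continuous_ridgeIntegral hs hν (continuous_zeroCutoff_mul hwc n) hT).continuousOn)

lemma tendsto_ridgeIntegral_regularized (hs : IsCompact s) (hν : ∀ᵐ ξ ∂ν, ξ ∈ s)
    (hk : Continuous k) (hkw : ∀ r ≠ 0, HasDerivAt k (w r) r) (hwc : ContinuousOn w {0}ᶜ)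
    (hw : LocallyIntegrable w) (hT : Continuous T) (x : E) :
    Tendsto (fun n : ℕ =>
      ridgeIntegral ν (fun t => k 0 + ∫ r in (0)..t, zeroCutoff n r * w r) T x) atTop
      (𝓝 (ridgeIntegral ν k T x)) := by
  have hTi : Integrable (fun ξ => ‖T ξ‖) ν := by
    simpa using (integrable_ridge hs hν (continuous_const (y := (1 : ℝ))) hT x).norm
  have hkn (n : ℕ) : Continuous fun t => k 0 + ∫ r in (0)..t, zeroCutoff n r * w r :=
    continuous_const.add (intervalIntegral.continuous_primitive
      (fun a b => (continuous_zeroCutoff_mul hwc n).intervalIntegrable a b) 0)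
  have herr : Tendsto (fun n => cutoffError w n * ∫ ξ, ‖T ξ‖ ∂ν) atTop (𝓝 0) := by
    simpa using (tendsto_cutoffError hw).mul_const (∫ ξ, ‖T ξ‖ ∂ν)
  refine tendsto_iff_norm_sub_tendsto_zero.2
    (squeeze_zero (fun n => norm_nonneg _) (fun n => ?_) herr)
  simp only [ridgeIntegral]
  rw [← integral_sub (integrable_ridge hs hν (hkn n) hT x) (integrable_ridge hs hν hk hT x),
    ← integral_const_mul]
  refine norm_integral_le_of_norm_le (hTi.const_mul _) (.of_forall fun ξ => ?_)
  rw [← sub_smul, norm_smul]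
  exact mul_le_mul_of_nonneg_right
    (abs_add_integral_zeroCutoff_mul_sub_le hk hkw hwc hw n ⟪x, ξ⟫) (norm_nonneg _)

theorem hasFDerivAt_ridgeIntegral_of_locallyIntegrable (hs : IsCompact s)
    (hν : ∀ᵐ ξ ∂ν, ξ ∈ s) (hB : HasBoundedMarginalsNearZero ν) (hk : Continuous k)
    (hkw : ∀ r ≠ 0, HasDerivAt k (w r) r) (hwc : ContinuousOn w {0}ᶜ)
    (hw : LocallyIntegrable w) (hT : Continuous T) (hx : x ≠ 0) :
    HasFDerivAt (ridgeIntegral ν k T) (ridgeIntegral ν w (ridgeCoeff T) x) x := by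
  have hcut (n : ℕ) := continuous_zeroCutoff_mul hwc n
  exact hasFDerivAt_of_tendstoLocallyUniformlyOn isOpen_compl_singleton
    (tendstoLocallyUniformlyOn_ridgeIntegral_zeroCutoff hs hν hB hwc hw (continuous_ridgeCoeff hT))
    (fun n x _ => hasFDerivAt_ridgeIntegral hs hν
      (fun t => (((hcut n).integral_hasStrictDerivAt 0 t).hasDerivAt).const_add (k 0))
      (hcut n) hT x)
    (fun x _ => tendsto_ridgeIntegral_regularized hs hν hk hkw hwc hw hT x) hx

end Singular

end RidgeIntegral

section AbsPow

/-- The derivative of `r ↦ |r| ^ p` for `1 < p`. -/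
def absPowDeriv (p r : ℝ) : ℝ := p * |r| ^ (p - 2) * r

/-- The second derivative of `r ↦ |r| ^ p` away from the origin; for `p < 2` it has an integrable
singularity there. -/
def absPowDeriv₂ (p r : ℝ) : ℝ := p * (p - 1) * |r| ^ (p - 2)

variable {p : ℝ}

lemma continuous_abs_rpow (hp : 0 ≤ p) : Continuous fun r : ℝ => |r| ^ p :=
  continuous_abs.rpow_const fun _ => Or.inr hp

lemma continuous_absPowDeriv (hp : 1 < p) : Continuous (absPowDeriv p) := by
  have hC : ContDiff ℝ 1 fun r : ℝ => |r| ^ p := by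
    simpa only [Real.norm_eq_abs] using contDiff_norm_rpow (E := ℝ) hp
  have hderiv : deriv (fun r : ℝ => |r| ^ p) = absPowDeriv p :=
    funext fun r => (hasDerivAt_abs_rpow r hp).deriv
  exact hderiv ▸ hC.continuous_deriv le_rfl

lemma hasDerivAt_absPowDeriv {r : ℝ} (hr : r ≠ 0) :
    HasDerivAt (absPowDeriv p) (absPowDeriv₂ p r) r := by
  have h := (((hasDerivAt_abs hr).rpow_const (p := p - 2) (Or.inl (abs_ne_zero.2 hr))).const_mul
    p).mul (hasDerivAt_id r)
  refine h.congr_deriv ?_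
  have hsign : (SignType.sign r : ℝ) * r = |r| := sign_mul_self r
  have hpow : |r| ^ (p - 2 - 1) * |r| = |r| ^ (p - 2) := by
    rw [← Real.rpow_add_one (abs_ne_zero.2 hr)]
    ring_nf
  rw [absPowDeriv₂, id_eq]
  linear_combination p * (p - 2) * |r| ^ (p - 2 - 1) * hsign + p * (p - 2) * hpow

lemma continuousOn_absPowDeriv₂ (p : ℝ) : ContinuousOn (absPowDeriv₂ p) {0}ᶜ :=
  continuousOn_const.mul
    (continuousOn_id.abs.rpow_const fun _ hr => Or.inl (abs_ne_zero.2 hr))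

lemma locallyIntegrable_absPowDeriv₂ (hp : 1 < p) : LocallyIntegrable (absPowDeriv₂ p) := by
  refine locallyIntegrable_of_norm_le_rpow (C := p * (p - 1)) (α := 2 - p) (by simp)
    (by simp; linarith) (.of_forall fun r => ?_)
    (measurable_of_continuousOn_compl_singleton 0
      (continuousOn_absPowDeriv₂ p)).aestronglyMeasurable
  have hnonneg : 0 ≤ absPowDeriv₂ p r :=
    mul_nonneg (mul_nonneg (by linarith) (by linarith)) (by positivity)
  rw [Real.norm_of_nonneg hnonneg, neg_sub, Real.norm_eq_abs, absPowDeriv₂]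

lemma absPowDeriv₂_pos (hp : 1 < p) {r : ℝ} (hr : r ≠ 0) : 0 < absPowDeriv₂ p r :=
  mul_pos (mul_pos (by linarith) (by linarith)) (Real.rpow_pos_of_pos (abs_pos.2 hr) _)

lemma absPowDeriv_mul_self (hp : 0 < p) (r : ℝ) : absPowDeriv p r * r = p * |r| ^ p := by
  rcases eq_or_ne r 0 with rfl | hr
  · simp [Real.zero_rpow hp.ne']
  · have hpow : |r| ^ (p - 2) * |r| ^ 2 = |r| ^ p := by
      rw [← Real.rpow_add_natCast (abs_ne_zero.2 hr)]
      simp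
    rw [absPowDeriv, ← hpow, sq_abs]
    ring

lemma absPowDeriv₂_mul_self (p r : ℝ) : absPowDeriv₂ p r * r = (p - 1) * absPowDeriv p r := by
  rw [absPowDeriv₂, absPowDeriv]
  ring

end AbsPow

section LpMoment

variable {E : Type*} [NormedAddCommGroup E] [InnerProductSpace ℝ E] [MeasurableSpace E]

/-- The `p`-th absolute moment of the linear functional `⟪x, ·⟫` under `ν`. -/
def lpMoment (ν : Measure E) (p : ℝ) (x : E) : ℝ := ∫ ξ, |⟪x, ξ⟫| ^ p ∂ν

/-- The gradient of `lpMoment ν p`. -/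
def lpMomentGrad (ν : Measure E) (p : ℝ) : E → E := ridgeIntegral ν (absPowDeriv p) id

/-- The Hessian operator of `lpMoment ν p`. -/
def lpMomentHess (ν : Measure E) (p : ℝ) : E → E →L[ℝ] E :=
  ridgeIntegral ν (absPowDeriv₂ p) (ridgeCoeff id)

lemma integral_pos_of_ae_pos {α : Type*} [MeasurableSpace α] {μ : Measure α} {g : α → ℝ}
    (hμ : μ ≠ 0) (hg : Integrable g μ) (hpos : ∀ᵐ a ∂μ, 0 < g a) : 0 < ∫ a, g a ∂μ := by
  rw [integral_pos_iff_support_of_nonneg_ae (hpos.mono fun _ => le_of_lt) hg]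
  have hsupp : Function.support g =ᵐ[μ] univ :=
    eventuallyEq_univ.2 (hpos.mono fun _ => ne_of_gt)
  rwa [measure_congr hsupp, pos_iff_ne_zero, Ne, Measure.measure_univ_eq_zero]

variable [FiniteDimensional ℝ E] [BorelSpace E] {ν : Measure E} [IsFiniteMeasure ν] {s : Set E}
  {p : ℝ} {u x : E}

lemma hasGradientAt_lpMoment (hs : IsCompact s) (hν : ∀ᵐ ξ ∂ν, ξ ∈ s) (hp : 1 < p) (x : E) :
    HasGradientAt (lpMoment ν p) (lpMomentGrad ν p x) x := by
  have hridge : lpMoment ν p = ridgeIntegral ν (fun r => |r| ^ p) fun _ => (1 : ℝ) := by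
    ext x
    simp [lpMoment, ridgeIntegral]
  rw [hasGradientAt_iff_hasFDerivAt, hridge]
  refine (hasFDerivAt_ridgeIntegral hs hν (fun r => hasDerivAt_abs_rpow r hp)
    (continuous_absPowDeriv hp) continuous_const x).congr_fderiv ?_
  have hcomm := (innerSL ℝ (E := E)).integral_comp_comm
    (integrable_ridge hs hν (continuous_absPowDeriv hp) continuous_id x)
  refine Eq.trans (integral_congr_ae (.of_forall fun ξ => ?_)) hcomm
  ext v
  change absPowDeriv p ⟪x, ξ⟫ * (⟪ξ, v⟫ * 1) = ⟪absPowDeriv p ⟪x, ξ⟫ • ξ, v⟫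
  rw [real_inner_smul_left, mul_one]

lemma hasFDerivAt_lpMomentGrad (hs : IsCompact s) (hν : ∀ᵐ ξ ∂ν, ξ ∈ s)
    (hB : HasBoundedMarginalsNearZero ν) (hp : 1 < p) (hx : x ≠ 0) :
    HasFDerivAt (lpMomentGrad ν p) (lpMomentHess ν p x) x :=
  hasFDerivAt_ridgeIntegral_of_locallyIntegrable hs hν hB (continuous_absPowDeriv hp)
    (fun _ => hasDerivAt_absPowDeriv) (continuousOn_absPowDeriv₂ p)
    (locallyIntegrable_absPowDeriv₂ hp) continuous_id hx

lemma contDiffOn_lpMoment (hs : IsCompact s) (hν : ∀ᵐ ξ ∂ν, ξ ∈ s)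
    (hB : HasBoundedMarginalsNearZero ν) (hp : 1 < p) :
    ContDiffOn ℝ 2 (lpMoment ν p) {0}ᶜ := by
  have hopen : UniqueDiffOn ℝ ({0}ᶜ : Set E) := isOpen_compl_singleton.uniqueDiffOn
  have hgrad : ContDiffOn ℝ (0 + 1) (lpMomentGrad ν p) {0}ᶜ :=
    (contDiffOn_succ_iff_hasFDerivWithinAt_of_uniqueDiffOn hopen).2
      ⟨by simp, lpMomentHess ν p,
        contDiffOn_zero.2 (continuousOn_ridgeIntegral_of_locallyIntegrable hs hν hB
          (continuousOn_absPowDeriv₂ p) (locallyIntegrable_absPowDeriv₂ hp)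
          (continuous_ridgeCoeff continuous_id)),
        fun x hx => (hasFDerivAt_lpMomentGrad hs hν hB hp hx).hasFDerivWithinAt⟩
  rw [zero_add] at hgrad
  exact (contDiffOn_succ_iff_hasFDerivWithinAt_of_uniqueDiffOn (n := 1) hopen).2
    ⟨by simp, fun x => innerSL ℝ (lpMomentGrad ν p x),
      (innerSL ℝ).contDiff.comp_contDiffOn hgrad,
      fun x _ => (hasGradientAt_lpMoment hs hν hp x).hasFDerivAt.hasFDerivWithinAt⟩

lemma lpMoment_pos (hs : IsCompact s) (hν : ∀ᵐ ξ ∂ν, ξ ∈ s)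
    (hB : HasBoundedMarginalsNearZero ν) (hν0 : ν ≠ 0) (hp : 0 ≤ p) (hx : x ≠ 0) :
    0 < lpMoment ν p x := by
  refine integral_pos_of_ae_pos hν0 ?_ ((hB.ae_inner_ne_zero hx).mono fun ξ hξ => by positivity)
  simpa using integrable_ridge hs hν (continuous_abs_rpow hp) (continuous_const (y := (1 : ℝ))) x

lemma inner_lpMomentHess (hs : IsCompact s) (hν : ∀ᵐ ξ ∂ν, ξ ∈ s)
    (hB : HasBoundedMarginalsNearZero ν) (hp : 1 < p) (hu : u ≠ 0) (a b : E) :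
    ⟪lpMomentHess ν p u a, b⟫ = ∫ ξ, absPowDeriv₂ p ⟪u, ξ⟫ * (⟪a, ξ⟫ * ⟪b, ξ⟫) ∂ν := by
  have hi := integrable_ridge_of_locallyIntegrable hs hν hB (continuousOn_absPowDeriv₂ p)
    (locallyIntegrable_absPowDeriv₂ hp) (continuous_ridgeCoeff continuous_id) hu
  rw [lpMomentHess, ridgeIntegral, ContinuousLinearMap.integral_apply hi, real_inner_comm,
    ← integral_inner (hi.apply_continuousLinearMap a)]
  refine integral_congr_ae (.of_forall fun ξ => ?_)
  simp [ridgeCoeff, real_inner_smul_right, real_inner_comm]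

lemma inner_lpMomentHess_comm (hs : IsCompact s) (hν : ∀ᵐ ξ ∂ν, ξ ∈ s)
    (hB : HasBoundedMarginalsNearZero ν) (hp : 1 < p) (hu : u ≠ 0) (a b : E) :
    ⟪lpMomentHess ν p u a, b⟫ = ⟪lpMomentHess ν p u b, a⟫ := by
  simp only [inner_lpMomentHess hs hν hB hp hu, mul_comm]

lemma inner_lpMomentHess_self_pos (hs : IsCompact s) (hν : ∀ᵐ ξ ∂ν, ξ ∈ s)
    (hB : HasBoundedMarginalsNearZero ν) (hν0 : ν ≠ 0) (hp : 1 < p) (hu : u ≠ 0) {a : E}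
    (ha : a ≠ 0) : 0 < ⟪lpMomentHess ν p u a, a⟫ := by
  rw [inner_lpMomentHess hs hν hB hp hu]
  refine integral_pos_of_ae_pos hν0 ?_ ?_
  · exact integrable_ridge_of_locallyIntegrable hs hν hB (continuousOn_absPowDeriv₂ p)
      (locallyIntegrable_absPowDeriv₂ hp) (T := fun ξ => ⟪a, ξ⟫ * ⟪a, ξ⟫) (by fun_prop) hu
  · filter_upwards [hB.ae_inner_ne_zero hu, hB.ae_inner_ne_zero ha] with ξ huξ haξ
    exact mul_pos (absPowDeriv₂_pos hp huξ) (mul_self_pos.2 haξ)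

lemma lpMomentHess_apply_self (hs : IsCompact s) (hν : ∀ᵐ ξ ∂ν, ξ ∈ s)
    (hB : HasBoundedMarginalsNearZero ν) (hp : 1 < p) (hu : u ≠ 0) :
    lpMomentHess ν p u u = (p - 1) • lpMomentGrad ν p u := by
  have hi := integrable_ridge_of_locallyIntegrable hs hν hB (continuousOn_absPowDeriv₂ p)
    (locallyIntegrable_absPowDeriv₂ hp) (continuous_ridgeCoeff continuous_id) hu
  rw [lpMomentHess, lpMomentGrad, ridgeIntegral, ridgeIntegral,
    ContinuousLinearMap.integral_apply hi, ← integral_smul]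
  refine integral_congr_ae (.of_forall fun ξ => ?_)
  simp [ridgeCoeff, smul_smul, ← absPowDeriv₂_mul_self, real_inner_comm]

lemma inner_lpMomentGrad_self (hs : IsCompact s) (hν : ∀ᵐ ξ ∂ν, ξ ∈ s) (hp : 1 < p) (u : E) :
    ⟪lpMomentGrad ν p u, u⟫ = p * lpMoment ν p u := by
  rw [lpMomentGrad, ridgeIntegral, real_inner_comm, lpMoment, ← integral_const_mul,
    ← integral_inner (integrable_ridge hs hν (continuous_absPowDeriv hp) continuous_id u)]
  refine integral_congr_ae (.of_forall fun ξ => ?_)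
  simp [real_inner_smul_right, absPowDeriv_mul_self (by linarith : 0 < p)]

-- By Euler's identities `D²F u u = (p - 1) ∇F u` and `⟪∇F u, u⟫ = p F u`, this is the strict
-- Cauchy–Schwarz inequality of the form `D²F u` for the pair `u, v`.
lemma sq_inner_lpMomentGrad_lt (hs : IsCompact s) (hν : ∀ᵐ ξ ∂ν, ξ ∈ s)
    (hB : HasBoundedMarginalsNearZero ν) (hν0 : ν ≠ 0) (hp : 1 < p) {v : E}
    (huv : LinearIndependent ℝ ![u, v]) :
    (p - 1) * ⟪lpMomentGrad ν p u, v⟫ ^ 2 < p * lpMoment ν p u * ⟪lpMomentHess ν p u v, v⟫ := by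
  have hu : u ≠ 0 := huv.ne_zero 0
  let B : LinearMap.BilinForm ℝ E := innerₗ E ∘ₗ (lpMomentHess ν p u).toLinearMap
  have hcs : B u v * B v u < B u u * B v v :=
    (B.apply_mul_apply_lt_iff_linearIndependent
      (fun a ha => inner_lpMomentHess_self_pos hs hν hB hν0 hp hu ha) u v).2 huv
  have huu : B u u = (p - 1) * (p * lpMoment ν p u) := by
    simp [B, lpMomentHess_apply_self hs hν hB hp hu, inner_lpMomentGrad_self hs hν hp]
  have huv : B u v = (p - 1) * ⟪lpMomentGrad ν p u, v⟫ := by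
    simp [B, lpMomentHess_apply_self hs hν hB hp hu]
  have hvu : B v u = B u v := inner_lpMomentHess_comm hs hν hB hp hu v u
  rw [hvu, huv, huu] at hcs
  refine lt_of_mul_lt_mul_left ?_ (sub_pos.2 hp).le
  calc (p - 1) * ((p - 1) * ⟪lpMomentGrad ν p u, v⟫ ^ 2)
      = (p - 1) * ⟪lpMomentGrad ν p u, v⟫ * ((p - 1) * ⟪lpMomentGrad ν p u, v⟫) := by ring
    _ < (p - 1) * (p * lpMoment ν p u) * B v v := hcs
    _ = (p - 1) * (p * lpMoment ν p u * ⟪lpMomentHess ν p u v, v⟫) := mul_assoc _ _ _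

end LpMoment

section LpCosineNorm

variable {E : Type*} [NormedAddCommGroup E] [InnerProductSpace ℝ E] [MeasurableSpace E]

/-- The `L^p` cosine transform of `ν`, normalised to be homogeneous of degree one: the `L^p(ν)`
norm of the linear functional `⟪x, ·⟫`. -/
def lpCosineNorm (ν : Measure E) (p : ℝ) (x : E) : ℝ := lpMoment ν p x ^ (1 / p)

variable [FiniteDimensional ℝ E] [BorelSpace E] {ν : Measure E} [IsFiniteMeasure ν] {s : Set E}
  {p : ℝ} {u x : E}

lemma contDiffOn_lpCosineNorm (hs : IsCompact s) (hν : ∀ᵐ ξ ∂ν, ξ ∈ s)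
    (hB : HasBoundedMarginalsNearZero ν) (hν0 : ν ≠ 0) (hp : 1 < p) :
    ContDiffOn ℝ 2 (lpCosineNorm ν p) {0}ᶜ :=
  (contDiffOn_lpMoment hs hν hB hp).rpow_const_of_ne fun _ hx =>
    (lpMoment_pos hs hν hB hν0 (by linarith) hx).ne'

lemma gradient_lpCosineNorm (hs : IsCompact s) (hν : ∀ᵐ ξ ∂ν, ξ ∈ s)
    (hB : HasBoundedMarginalsNearZero ν) (hν0 : ν ≠ 0) (hp : 1 < p) (hx : x ≠ 0) :
    gradient (lpCosineNorm ν p) x =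
      (1 / p * lpMoment ν p x ^ (1 / p - 1)) • lpMomentGrad ν p x := by
  have hF := (hasGradientAt_lpMoment hs hν hp x).hasFDerivAt.rpow_const (p := 1 / p)
    (Or.inl (lpMoment_pos hs hν hB hν0 (by linarith) hx).ne')
  rw [← map_smul] at hF
  exact (hasGradientAt_iff_hasFDerivAt.2 hF).gradient

lemma inner_fderiv_gradient_lpCosineNorm (hs : IsCompact s) (hν : ∀ᵐ ξ ∂ν, ξ ∈ s)
    (hB : HasBoundedMarginalsNearZero ν) (hν0 : ν ≠ 0) (hp : 1 < p) (hu : u ≠ 0) (v : E) :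
    ⟪fderiv ℝ (gradient (lpCosineNorm ν p)) u v, v⟫ =
      lpMoment ν p u ^ (1 / p - 2) / p ^ 2 *
        (p * lpMoment ν p u * ⟪lpMomentHess ν p u v, v⟫ -
          (p - 1) * ⟪lpMomentGrad ν p u, v⟫ ^ 2) := by
  have hF : 0 < lpMoment ν p u := lpMoment_pos hs hν hB hν0 (by linarith) hu
  have hgrad : gradient (lpCosineNorm ν p) =ᶠ[𝓝 u]
      fun x => (1 / p * lpMoment ν p x ^ (1 / p - 1)) • lpMomentGrad ν p x :=
    (eventually_ne_nhds hu).mono fun x hx => gradient_lpCosineNorm hs hν hB hν0 hp hx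
  have hderiv := (((hasGradientAt_lpMoment hs hν hp u).hasFDerivAt.rpow_const
    (p := 1 / p - 1) (Or.inl hF.ne')).const_mul (1 / p)).smul
      (hasFDerivAt_lpMomentGrad hs hν hB hp hu)
  have hpow : lpMoment ν p u ^ (1 / p - 1) = lpMoment ν p u ^ (1 / p - 2) * lpMoment ν p u := by
    rw [← Real.rpow_add_one hF.ne']
    ring_nf
  rw [(hderiv.congr_of_eventuallyEq hgrad).fderiv]
  simp only [add_apply, smul_apply, ContinuousLinearMap.smulRight_apply,
    InnerProductSpace.toDual_apply_apply, inner_add_left, real_inner_smul_left, smul_eq_mul]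
  rw [show 1 / p - 1 - 1 = 1 / p - 2 by ring, hpow]
  field_simp
  ring

lemma inner_fderiv_gradient_lpCosineNorm_pos (hs : IsCompact s) (hν : ∀ᵐ ξ ∂ν, ξ ∈ s)
    (hB : HasBoundedMarginalsNearZero ν) (hν0 : ν ≠ 0) (hp : 1 < p) {v : E}
    (huv : LinearIndependent ℝ ![u, v]) :
    0 < ⟪fderiv ℝ (gradient (lpCosineNorm ν p)) u v, v⟫ := by
  have hu : u ≠ 0 := huv.ne_zero 0
  have hF : 0 < lpMoment ν p u := lpMoment_pos hs hν hB hν0 (by linarith) hu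
  rw [inner_fderiv_gradient_lpCosineNorm hs hν hB hν0 hp hu]
  exact mul_pos (by positivity) (sub_pos.2 (sq_inner_lpMomentGrad_lt hs hν hB hν0 hp huv))

end LpCosineNorm

section DualBody

variable {E : Type*} [NormedAddCommGroup E] [InnerProductSpace ℝ E]

/-- The set whose support function is the seminorm `q`. When `q` is the norm of a normed space,
this is its dual unit ball. -/
def dualBody (q : Seminorm ℝ E) : Set E := {y | ∀ x, ⟪x, y⟫ ≤ q x}

variable {q : Seminorm ℝ E}

lemma dualBody_eq_iInter (q : Seminorm ℝ E) : dualBody q = ⋂ x, {y | ⟪x, y⟫ ≤ q x} := by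
  ext y
  simp [dualBody]

lemma convex_dualBody : Convex ℝ (dualBody q) := by
  rw [dualBody_eq_iInter]
  exact convex_iInter fun x => convex_halfSpace_le (innerₛₗ ℝ x).isLinear (q x)

lemma mem_dualBody_iff_neg_mem {y : E} : y ∈ dualBody q ↔ -y ∈ dualBody q := by
  have hneg : ∀ z ∈ dualBody q, -z ∈ dualBody q := fun z hz x => by
    simpa using hz (-x)
  exact ⟨hneg y, fun hy => by simpa using hneg _ hy⟩

variable [FiniteDimensional ℝ E]

lemma continuous_seminorm (q : Seminorm ℝ E) : Continuous q :=
  q.convexOn.locallyLipschitz.continuous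

lemma isCompact_dualBody : IsCompact (dualBody q) := by
  obtain ⟨C, hC0, hC⟩ := q.bound_of_continuous_normedSpace (continuous_seminorm q)
  refine isCompact_of_isClosed_isBounded ?_ (isBounded_iff_forall_norm_le.2 ⟨C, fun y hy => ?_⟩)
  · rw [dualBody_eq_iInter]
    exact isClosed_iInter fun x => isClosed_le (by fun_prop) continuous_const
  · rcases eq_or_ne y 0 with rfl | hy0
    · simpa using hC0.le
    · refine le_of_mul_le_mul_right ?_ (norm_pos_iff.2 hy0)
      calc ‖y‖ * ‖y‖ = ⟪y, y⟫ := (real_inner_self_eq_norm_mul_norm y).symm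
        _ ≤ q y := hy y
        _ ≤ C * ‖y‖ := hC y

lemma exists_mul_norm_le_seminorm (hq : ∀ x, x ≠ 0 → 0 < q x) :
    ∃ c > 0, ∀ x, c * ‖x‖ ≤ q x := by
  obtain ⟨c, hc, hcq⟩ := (isCompact_sphere (0 : E) 1).exists_forall_le'
    (continuous_seminorm q).continuousOn fun x hx => hq x (ne_of_mem_sphere hx one_ne_zero)
  refine ⟨c, hc, fun x => ?_⟩
  rcases eq_or_ne x 0 with rfl | hx
  · simp
  · have hx0 : 0 < ‖x‖ := norm_pos_iff.2 hx
    have hunit := hcq (‖x‖⁻¹ • x) (by simp [norm_smul, hx0.ne'])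
    rwa [map_smul_eq_mul, norm_inv, norm_norm, inv_mul_eq_div, le_div_iff₀ hx0] at hunit

lemma nonempty_interior_dualBody (hq : ∀ x, x ≠ 0 → 0 < q x) :
    (interior (dualBody q)).Nonempty := by
  obtain ⟨c, hc, hcq⟩ := exists_mul_norm_le_seminorm hq
  refine ⟨0, mem_interior.2 ⟨ball 0 c, fun y hy x => ?_, isOpen_ball, mem_ball_self hc⟩⟩
  have hy : ‖y‖ ≤ c := (mem_ball_zero_iff.1 hy).le
  calc ⟪x, y⟫ ≤ ‖x‖ * ‖y‖ := real_inner_le_norm x y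
    _ ≤ c * ‖x‖ := by rw [mul_comm]; gcongr
    _ ≤ q x := hcq x

lemma exists_mem_dualBody_inner_eq (q : Seminorm ℝ E) (x : E) :
    ∃ y ∈ dualBody q, ⟪x, y⟫ = q x := by
  have hq : ∀ c : ℝ, c • x = 0 → c • q x = 0 := fun c hc => by
    have habs : |c| * q x = 0 := by simpa [hc] using (map_smul_eq_mul q c x).symm
    simpa using habs
  let f : E →ₗ.[ℝ] ℝ := LinearPMap.mkSpanSingleton' x (q x) hq
  have hf : ∀ z : f.domain, f z ≤ q z := by
    rintro ⟨z, hz⟩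
    obtain ⟨c, rfl⟩ := Submodule.mem_span_singleton.1 hz
    rw [LinearPMap.mkSpanSingleton'_apply, map_smul_eq_mul, smul_eq_mul, Real.norm_eq_abs]
    exact mul_le_mul_of_nonneg_right (le_abs_self c) (apply_nonneg q x)
  obtain ⟨g, hgf, hgq⟩ := Module.Dual.exists_extension_of_le_seminorm_real f.domain f.toFun hf
  refine ⟨(InnerProductSpace.toDual ℝ E).symm (LinearMap.toContinuousLinearMap g), fun z => ?_, ?_⟩
  · rw [real_inner_comm, InnerProductSpace.toDual_symm_apply]
    exact (le_abs_self _).trans (hgq z)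
  · rw [real_inner_comm, InnerProductSpace.toDual_symm_apply]
    refine (hgf ⟨x, Submodule.mem_span_singleton_self x⟩).trans ?_
    exact LinearPMap.mkSpanSingleton'_apply_self x (q x) hq _

lemma iSup_inner_dualBody (q : Seminorm ℝ E) (x : E) :
    ⨆ y : dualBody q, ⟪x, (y : E)⟫ = q x := by
  obtain ⟨y, hy, hxy⟩ := exists_mem_dualBody_inner_eq q x
  have : Nonempty (dualBody q) := ⟨⟨y, hy⟩⟩
  exact le_antisymm (ciSup_le fun z => z.2 x)
    (hxy ▸ le_ciSup (f := fun z : dualBody q => ⟪x, (z : E)⟫)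
      ⟨q x, forall_mem_range.2 fun z => z.2 x⟩ ⟨y, hy⟩)

end DualBody

section LpCosineSeminorm

variable {E : Type*} [NormedAddCommGroup E] [InnerProductSpace ℝ E] [MeasurableSpace E]
  [BorelSpace E] {ν : Measure E} {p : ℝ}

lemma lpCosineNorm_eq_lpNorm [SecondCountableTopology E] (hp : 0 < p) (x : E) :
    lpCosineNorm ν p x = lpNorm (fun ξ => ⟪x, ξ⟫) (ENNReal.ofReal p) ν := by
  rw [lpNorm_eq_integral_norm_rpow_toReal (by simpa using hp) ENNReal.ofReal_ne_top
    (by fun_prop), ENNReal.toReal_ofReal hp.le, lpCosineNorm, lpMoment, one_div]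
  simp only [Real.norm_eq_abs]

/-- `lpCosineNorm ν p` as a seminorm, by Minkowski's inequality. -/
def lpCosineSeminorm [SecondCountableTopology E] (hp : 1 ≤ p)
    (hν : MemLp id (ENNReal.ofReal p) ν) : Seminorm ℝ E :=
  Seminorm.of (lpCosineNorm ν p)
    (fun x y => by
      have hx : MemLp (fun ξ => ⟪x, ξ⟫) (ENNReal.ofReal p) ν := hν.const_inner x
      simp only [lpCosineNorm_eq_lpNorm (zero_lt_one.trans_le hp), inner_add_left]
      exact lpNorm_add_le hx (by simpa using hp))
    (fun a x => by
      simp only [lpCosineNorm_eq_lpNorm (zero_lt_one.trans_le hp), real_inner_smul_left]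
      exact lpNorm_const_smul a _ ν)

end LpCosineSeminorm

section SphereMeasure

lemma hausdorffMeasure_le_of_dist_le {X Y : Type*} [MetricSpace X] [MeasurableSpace X]
    [BorelSpace X] [MetricSpace Y] [MeasurableSpace Y] [BorelSpace Y] {P : Set X} {K : ℝ≥0}
    {g : X → Y} {d : ℝ} (hd : 0 ≤ d) (h : ∀ x ∈ P, ∀ y ∈ P, dist x y ≤ K * dist (g x) (g y)) :
    μH[d] P ≤ (K : ℝ≥0∞) ^ d * μH[d] (g '' P) := by
  have hanti : AntilipschitzWith K (P.domRestrict g) :=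
    .of_le_mul_dist fun x y => h x x.2 y y.2
  have hcoe : μH[d] P = μH[d] (univ : Set P) := by
    simpa using (isometry_subtype_coe (s := P)).hausdorffMeasure_image (Or.inl hd) univ
  calc μH[d] P = μH[d] (univ : Set P) := hcoe
    _ ≤ (K : ℝ≥0∞) ^ d * μH[d] (P.domRestrict g '' univ) := hanti.le_hausdorffMeasure_image hd _
    _ = (K : ℝ≥0∞) ^ d * μH[d] (g '' P) := by rw [image_univ, Set.range_domRestrict]

variable {E ι : Type*} [NormedAddCommGroup E] [InnerProductSpace ℝ E] [Fintype ι]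

lemma abs_inner_orthonormalBasis_le (b : OrthonormalBasis ι ℝ E) (i : ι) (x : E) :
    |⟪b i, x⟫| ≤ ‖x‖ := by
  simpa using abs_real_inner_le_norm (b i) x

lemma sum_sq_inner_of_mem_sphere (b : OrthonormalBasis ι ℝ E) {x : E} (hx : x ∈ sphere 0 1) :
    ∑ k, ⟪b k, x⟫ ^ 2 = 1 := by
  simpa [mem_sphere_zero_iff_norm.1 hx] using b.sum_sq_norm_inner_right x

lemma inner_mem_Icc_of_mem_sphere (b : OrthonormalBasis ι ℝ E) (k : ι) {x : E}
    (hx : x ∈ sphere 0 1) : ⟪b k, x⟫ ∈ Icc (-1) 1 :=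
  abs_le.1 ((abs_inner_orthonormalBasis_le b k x).trans_eq (mem_sphere_zero_iff_norm.1 hx))

lemma exists_inv_le_abs_of_le_sum_sq {s : Finset ι} {a : ι → ℝ} (ha : 1 / 4 ≤ ∑ k ∈ s, a k ^ 2) :
    ∃ k ∈ s, (2 * Fintype.card ι : ℝ)⁻¹ ≤ |a k| := by
  have hs : s.Nonempty := Finset.nonempty_of_sum_ne_zero (by linarith : 0 ≠ ∑ k ∈ s, a k ^ 2).symm
  have hN : (1 : ℝ) ≤ Fintype.card ι := mod_cast hs.card_pos.trans_le s.card_le_univ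
  have hcard : (s.card : ℝ) ≤ Fintype.card ι := mod_cast s.card_le_univ
  have hsum : ∑ _k ∈ s, (2 * Fintype.card ι : ℝ)⁻¹ ^ 2 ≤ ∑ k ∈ s, a k ^ 2 := by
    refine le_trans ?_ ha
    rw [Finset.sum_const, nsmul_eq_mul, inv_pow, ← div_eq_mul_inv, div_le_div_iff₀ (by positivity)
      (by norm_num)]
    nlinarith
  obtain ⟨k, hk, hle⟩ := Finset.exists_le_of_sum_le hs hsum
  exact ⟨k, hk, (le_abs_self _).trans (sq_le_sq.1 hle)⟩

section DropCoord

variable [DecidableEq ι] {b : OrthonormalBasis ι ℝ E} {i j : ι} {x y : E}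

/-- The coordinates of a vector other than the `i`-th one, in the orthonormal basis `b`. They
serve as charts of the sphere; the target carries the sup norm, for which the Hausdorff measure of
top dimension is the Lebesgue measure. -/
def dropCoord (b : OrthonormalBasis ι ℝ E) (i : ι) (ξ : E) : {k // k ≠ i} → ℝ :=
  fun k => ⟪b k, ξ⟫

lemma lipschitzWith_dropCoord (b : OrthonormalBasis ι ℝ E) (i : ι) :
    LipschitzWith 1 (dropCoord b i) :=
  .of_dist_le_mul fun x y => by
    rw [NNReal.coe_one, one_mul, dist_pi_le_iff dist_nonneg]
    intro k
    rw [Real.dist_eq, dist_eq_norm, dropCoord, dropCoord, ← inner_sub_right]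
    exact abs_inner_orthonormalBasis_le b k (x - y)

lemma sum_subtype_ne_le_card_mul {g : {k // k ≠ i} → ℝ} {C : ℝ} (hC : 0 ≤ C)
    (hg : ∀ k, g k ≤ C) : ∑ k, g k ≤ Fintype.card ι * C := by
  refine (Finset.sum_le_card_nsmul _ _ C fun k _ => hg k).trans ?_
  rw [nsmul_eq_mul]
  gcongr
  exact Fintype.card_subtype_le _

-- As `x - y` is orthogonal to `x + y`, the dropped coordinate of `x - y` is controlled by the
-- others wherever that of `x + y` is bounded away from zero.
lemma mul_abs_inner_sub_le (hx : ‖x‖ = 1) (hy : ‖y‖ = 1) :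
    |⟪b i, x + y⟫| * |⟪b i, x - y⟫| ≤
      Fintype.card ι * (2 * dist (dropCoord b i x) (dropCoord b i y)) := by
  have horth : ⟪x + y, x - y⟫ = 0 := by
    rw [real_inner_add_sub_eq_zero_iff, hx, hy]
  have hsum : ⟪b i, x + y⟫ * ⟪b i, x - y⟫ =
      -∑ k : {k // k ≠ i}, ⟪b k, x + y⟫ * ⟪b k, x - y⟫ := by
    rw [← b.sum_inner_mul_inner, Fintype.sum_eq_add_sum_subtype_ne _ i] at horth
    simp only [real_inner_comm _ (x + y)] at horth
    exact eq_neg_of_add_eq_zero_left horth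
  rw [← abs_mul, hsum, abs_neg]
  refine (Finset.abs_sum_le_sum_abs _ _).trans (sum_subtype_ne_le_card_mul (by positivity) ?_)
  intro k
  rw [abs_mul]
  gcongr
  · calc |⟪b k, x + y⟫| ≤ ‖x + y‖ := abs_inner_orthonormalBasis_le b k _
      _ ≤ ‖x‖ + ‖y‖ := norm_add_le x y
      _ = 2 := by rw [hx, hy]; norm_num
  · rw [inner_sub_right]
    exact dist_le_pi_dist (dropCoord b i x) (dropCoord b i y) k

lemma dist_le_mul_dist_dropCoord (hx : ‖x‖ = 1) (hy : ‖y‖ = 1) {c : ℝ} (hc : 0 < c)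
    (hxy : c ≤ |⟪b i, x + y⟫|) :
    dist x y ≤ Fintype.card ι * (2 / c + 1) * dist (dropCoord b i x) (dropCoord b i y) := by
  set D := dist (dropCoord b i x) (dropCoord b i y)
  have hi : |⟪b i, x - y⟫| ≤ Fintype.card ι * (2 * D) / c := by
    rw [le_div_iff₀' hc]
    exact (mul_le_mul_of_nonneg_right hxy (abs_nonneg _)).trans (mul_abs_inner_sub_le hx hy)
  have hne : ∑ k : {k // k ≠ i}, |⟪b k, x - y⟫| ≤ Fintype.card ι * D :=
    sum_subtype_ne_le_card_mul dist_nonneg fun k => by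
      rw [inner_sub_right]
      exact dist_le_pi_dist (dropCoord b i x) (dropCoord b i y) k
  calc dist x y = ‖∑ k, ⟪b k, x - y⟫ • b k‖ := by rw [b.sum_repr', dist_eq_norm]
    _ ≤ ∑ k, |⟪b k, x - y⟫| := (norm_sum_le _ _).trans (by simp [norm_smul])
    _ = |⟪b i, x - y⟫| + ∑ k : {k // k ≠ i}, |⟪b k, x - y⟫| :=
      Fintype.sum_eq_add_sum_subtype_ne _ i
    _ ≤ Fintype.card ι * (2 * D) / c + Fintype.card ι * D := add_le_add hi hne
    _ = Fintype.card ι * (2 / c + 1) * D := by ring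

lemma setOf_sum_sq_lt_one_subset_image_sphere (b : OrthonormalBasis ι ℝ E) (i : ι) :
    {w : {k // k ≠ i} → ℝ | ∑ k, w k ^ 2 < 1} ⊆ dropCoord b i '' sphere 0 1 := by
  intro w hw
  let a : ι → ℝ := fun k => if h : k ≠ i then w ⟨k, h⟩ else √(1 - ∑ m, w m ^ 2)
  have hi : a i = √(1 - ∑ m, w m ^ 2) := dif_neg (not_not.2 rfl)
  have hne (k : {k // k ≠ i}) : a k = w k := dif_pos k.2
  have hinner (k : ι) : ⟪b k, ∑ m, a m • b m⟫ = a k := b.orthonormal.inner_right_fintype a k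
  refine ⟨∑ m, a m • b m, ?_, funext fun k => (hinner k).trans (hne k)⟩
  have hsq : ‖∑ m, a m • b m‖ ^ 2 = 1 := by
    rw [← b.sum_sq_norm_inner_right, Fintype.sum_eq_add_sum_subtype_ne _ i]
    simp only [hinner, hi, hne, Real.norm_eq_abs, sq_abs]
    rw [Real.sq_sqrt (sub_nonneg.2 (le_of_lt hw)), sub_add_cancel]
  exact mem_sphere_zero_iff_norm.2 ((pow_eq_one_iff_of_nonneg (norm_nonneg _) two_ne_zero).1 hsq)

/-- A bound, in dimension `N`, for the factor by which projecting along a coordinate axis shrinks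
areas on the part of the unit sphere where that coordinate is at least `(2 * N)⁻¹`. -/
def capConst (N : ℕ) : ℝ≥0 := (N * (2 * N + 1)) ^ (N - 1)

/-- A bound for the density on `[-1/2, 1/2]` of the marginals of surface measure on the unit sphere
of dimension `N - 1`. -/
def stripConst (N : ℕ) : ℝ≥0 := N * (2 * (capConst N * 2 ^ N))

variable [MeasurableSpace E] [BorelSpace E]

lemma hausdorffMeasure_cap_le {P : Set E} (hP : P ⊆ sphere 0 1)
    (hPi : ∀ x ∈ P, ∀ y ∈ P, (Fintype.card ι : ℝ)⁻¹ ≤ |⟪b i, x + y⟫|) {B : ι → Set ℝ}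
    (hB : ∀ x ∈ P, ∀ k, ⟪b k, x⟫ ∈ B k) :
    μH[(Fintype.card ι : ℝ) - 1] P ≤
      capConst (Fintype.card ι) * ∏ k : {k // k ≠ i}, volume (B k) := by
  have himage : dropCoord b i '' P ⊆ univ.pi fun k : {k // k ≠ i} => B k := by
    rintro _ ⟨x, hx, rfl⟩ k -
    exact hB x hx k
  have hN : 0 < Fintype.card ι := Fintype.card_pos_iff.2 ⟨i⟩
  have hcard : Fintype.card {k // k ≠ i} = Fintype.card ι - 1 := Set.card_ne_eq i
  rw [capConst, ENNReal.coe_pow, ← Nat.cast_pred hN, ← hcard, ← volume_pi_pi,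
    ← hausdorffMeasure_pi_real, ← ENNReal.rpow_natCast]
  refine (hausdorffMeasure_le_of_dist_le (g := dropCoord b i) (Nat.cast_nonneg _)
    fun x hx y hy => ?_).trans (mul_le_mul_right (measure_mono himage) _)
  simpa using dist_le_mul_dist_dropCoord (mem_sphere_zero_iff_norm.1 (hP hx))
    (mem_sphere_zero_iff_norm.1 (hP hy)) (by positivity) (hPi x hx y hy)

lemma hausdorffMeasure_le_sum_volume_box {S : Set E} (hS : S ⊆ sphere 0 1) {s : Finset ι}
    (hs : ∀ x ∈ S, 1 / 4 ≤ ∑ k ∈ s, ⟪b k, x⟫ ^ 2) {B : ι → Set ℝ}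
    (hB : ∀ x ∈ S, ∀ k, ⟪b k, x⟫ ∈ B k) :
    μH[(Fintype.card ι : ℝ) - 1] S ≤
      ∑ k ∈ s, 2 * (capConst (Fintype.card ι) * ∏ m : {m // m ≠ k}, volume (B m)) := by
  set c : ℝ := (2 * Fintype.card ι : ℝ)⁻¹
  have hcover : S ⊆ ⋃ k ∈ s, S ∩ {x | c ≤ ⟪b k, x⟫} ∪ S ∩ {x | ⟪b k, x⟫ ≤ -c} := by
    intro x hx
    obtain ⟨k, hk, hkx⟩ := exists_inv_le_abs_of_le_sum_sq (hs x hx)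
    exact mem_biUnion hk ((le_abs.1 hkx).imp (fun h => ⟨hx, h⟩) fun h => ⟨hx, le_neg_of_le_neg h⟩)
  refine (measure_mono hcover).trans ((measure_biUnion_finset_le s _).trans ?_)
  gcongr with k
  have hc : (Fintype.card ι : ℝ)⁻¹ = c + c := by
    simp only [c]
    ring
  rw [two_mul]
  refine (measure_union_le _ _).trans (add_le_add
    (hausdorffMeasure_cap_le (inter_subset_left.trans hS) (fun x hx y hy => ?_)
      fun x hx => hB x hx.1)
    (hausdorffMeasure_cap_le (inter_subset_left.trans hS) (fun x hx y hy => ?_)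
      fun x hx => hB x hx.1))
  · rw [hc, inner_add_right]
    exact le_abs.2 (Or.inl (add_le_add hx.2 hy.2))
  · rw [hc, inner_add_right]
    exact le_abs.2 (Or.inr (le_neg_of_le_neg ((add_le_add hx.2 hy.2).trans_eq (neg_add c c).symm)))

lemma prod_volume_update_Icc_le {j k : ι} (hjk : j ≠ k) (A : Set ℝ) :
    ∏ m : {m // m ≠ k}, volume (Function.update (fun _ => Icc (-1 : ℝ) 1) j A m) ≤
      2 ^ Fintype.card ι * volume A := by
  rw [← Finset.mul_prod_erase _ _ (Finset.mem_univ ⟨j, hjk⟩), Function.update_self, mul_comm]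
  gcongr
  calc ∏ m ∈ Finset.univ.erase (⟨j, hjk⟩ : {m // m ≠ k}),
        volume (Function.update (fun _ => Icc (-1 : ℝ) 1) j A m)
      = ∏ _m ∈ Finset.univ.erase (⟨j, hjk⟩ : {m // m ≠ k}), 2 := by
        refine Finset.prod_congr rfl fun m hm => ?_
        have hmj : (m : ι) ≠ j := fun h => Finset.ne_of_mem_erase hm (Subtype.ext h)
        rw [Function.update_of_ne hmj, Real.volume_Icc]
        norm_num
    _ ≤ 2 ^ Fintype.card ι := by
        rw [Finset.prod_const]
        exact pow_le_pow_right₀ one_le_two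
          ((Finset.card_le_univ _).trans (Fintype.card_subtype_le _))

end DropCoord

variable [MeasurableSpace E] [BorelSpace E]

lemma hausdorffMeasure_sphere_lt_top (b : OrthonormalBasis ι ℝ E) :
    μH[(Fintype.card ι : ℝ) - 1] (sphere (0 : E) 1) < ∞ := by
  classical
  refine (hausdorffMeasure_le_sum_volume_box (b := b) (s := Finset.univ)
    (B := fun _ => Icc (-1) 1) subset_rfl (fun x hx => ?_)
    fun x hx k => inner_mem_Icc_of_mem_sphere b k hx).trans_lt ?_
  · rw [sum_sq_inner_of_mem_sphere b hx]
    norm_num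
  · exact ENNReal.sum_lt_top.2 fun k _ => ENNReal.mul_lt_top (by finiteness) <|
      ENNReal.mul_lt_top ENNReal.coe_lt_top <| ENNReal.prod_lt_top fun _ _ => measure_Icc_lt_top

lemma hausdorffMeasure_sphere_inter_strip_le (b : OrthonormalBasis ι ℝ E) (j : ι) {A : Set ℝ}
    (hA : A ⊆ Icc (-(1 / 2)) (1 / 2)) :
    μH[(Fintype.card ι : ℝ) - 1] (sphere (0 : E) 1 ∩ {x | ⟪b j, x⟫ ∈ A}) ≤
      stripConst (Fintype.card ι) * volume A := by
  classical
  have hbox := hausdorffMeasure_le_sum_volume_box (b := b) (s := Finset.univ.erase j)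
    (B := Function.update (fun _ => Icc (-1) 1) j A)
    (S := sphere (0 : E) 1 ∩ {x | ⟪b j, x⟫ ∈ A}) inter_subset_left (fun x hx => ?_)
    fun x hx k => ?_
  · calc _ ≤ ∑ k ∈ Finset.univ.erase j, 2 * (capConst (Fintype.card ι) *
          ∏ m : {m // m ≠ k}, volume (Function.update (fun _ => Icc (-1 : ℝ) 1) j A m)) := hbox
      _ ≤ ∑ _k ∈ Finset.univ.erase j,
          2 * (capConst (Fintype.card ι) * (2 ^ Fintype.card ι * volume A)) := by
          gcongr with k hk
          exact prod_volume_update_Icc_le (Finset.ne_of_mem_erase hk).symm A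
      _ ≤ Fintype.card ι * (2 * (capConst (Fintype.card ι) * (2 ^ Fintype.card ι * volume A))) := by
          rw [Finset.sum_const, nsmul_eq_mul]
          gcongr
          exact Finset.card_le_univ _
      _ = stripConst (Fintype.card ι) * volume A := by
          rw [stripConst]
          push_cast
          ring
  · have hsum := Finset.add_sum_erase _ (fun k => ⟪b k, x⟫ ^ 2) (Finset.mem_univ j)
    rw [sum_sq_inner_of_mem_sphere b hx.1] at hsum
    have hj := hA hx.2
    nlinarith [hj.1, hj.2]
  · rcases eq_or_ne k j with rfl | hk
    · simpa using hx.2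
    · rw [Function.update_of_ne hk]
      exact inner_mem_Icc_of_mem_sphere b k hx.1

lemma hausdorffMeasure_sphere_pos (b : OrthonormalBasis ι ℝ E) (i : ι) :
    0 < μH[(Fintype.card ι : ℝ) - 1] (sphere (0 : E) 1) := by
  classical
  have hopen : IsOpen {w : {k // k ≠ i} → ℝ | ∑ k, w k ^ 2 < 1} :=
    isOpen_lt (by fun_prop) continuous_const
  have hcard : (Fintype.card {k // k ≠ i} : ℝ) = Fintype.card ι - 1 := by
    rw [← Nat.cast_pred (Fintype.card_pos_iff.2 ⟨i⟩)]
    exact congrArg _ (Set.card_ne_eq i)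
  have himage := (lipschitzWith_dropCoord b i).hausdorffMeasure_image_le
    (Fintype.card {k // k ≠ i}).cast_nonneg (sphere (0 : E) 1)
  rw [hausdorffMeasure_pi_real, ENNReal.coe_one, ENNReal.one_rpow, one_mul, hcard] at himage
  calc 0 < volume {w : {k // k ≠ i} → ℝ | ∑ k, w k ^ 2 < 1} := hopen.measure_pos _ ⟨0, by simp⟩
    _ ≤ volume (dropCoord b i '' sphere 0 1) :=
      measure_mono (setOf_sum_sq_lt_one_subset_image_sphere b i)
    _ ≤ μH[(Fintype.card ι : ℝ) - 1] (sphere (0 : E) 1) := himage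

/-- Surface measure on the unit sphere, as a measure on the ambient space. -/
def sphereMeasure (E : Type*) [NormedAddCommGroup E] [InnerProductSpace ℝ E] [MeasurableSpace E]
    [BorelSpace E] : Measure E :=
  (μH[(finrank ℝ E : ℝ) - 1]).restrict (sphere 0 1)

lemma sphereMeasure_euclideanSpace (n : ℕ) :
    sphereMeasure (EuclideanSpace ℝ (Fin n)) = (μH[(n : ℝ) - 1]).restrict (sphere 0 1) := by
  rw [sphereMeasure, finrank_euclideanSpace_fin]

lemma ae_mem_sphere_sphereMeasure : ∀ᵐ ξ ∂sphereMeasure E, ξ ∈ sphere (0 : E) 1 :=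
  ae_restrict_mem isClosed_sphere.measurableSet

variable [FiniteDimensional ℝ E]

instance : IsFiniteMeasure (sphereMeasure E) := by
  have h := hausdorffMeasure_sphere_lt_top (stdOrthonormalBasis ℝ E)
  rw [Fintype.card_fin] at h
  exact isFiniteMeasure_restrict.2 h.ne

instance [Nontrivial E] : NeZero (sphereMeasure E) := by
  have h := hausdorffMeasure_sphere_pos (stdOrthonormalBasis ℝ E) ⟨0, finrank_pos⟩
  rw [Fintype.card_fin] at h
  exact ⟨mt Measure.restrict_eq_zero.1 h.ne'⟩

lemma sphereMeasure_strip_le {x : E} (hx : x ≠ 0) {A : Set ℝ} (hA : MeasurableSet A)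
    (hAx : A ⊆ Icc (-(‖x‖ / 2)) (‖x‖ / 2)) :
    sphereMeasure E ((fun ξ => ⟪x, ξ⟫) ⁻¹' A) ≤
      stripConst (finrank ℝ E) * (ENNReal.ofReal ‖x‖⁻¹ * volume A) := by
  have hx0 : 0 < ‖x‖ := norm_pos_iff.2 hx
  have : Nontrivial E := ⟨x, 0, hx⟩
  let j : Fin (finrank ℝ E) := ⟨0, finrank_pos⟩
  obtain ⟨b, hb⟩ := Orthonormal.exists_orthonormalBasis_extension_of_card_eq (𝕜 := ℝ)
    (ι := Fin (finrank ℝ E)) (by simp) (v := fun _ => ‖x‖⁻¹ • x) (s := {j}) (by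
      rw [orthonormal_iff_ite]
      rintro ⟨_, rfl⟩ ⟨_, rfl⟩
      simp [norm_smul, hx])
  have hxb : x = ‖x‖ • b j := by
    rw [hb j rfl, smul_inv_smul₀ hx0.ne']
  have hstrip : (fun ξ => ⟪x, ξ⟫) ⁻¹' A = {ξ | ⟪b j, ξ⟫ ∈ (‖x‖ * ·) ⁻¹' A} := by
    ext ξ
    rw [mem_preimage, mem_ofPred_eq, mem_preimage, ← real_inner_smul_left, ← hxb]
  have hA' : (‖x‖ * ·) ⁻¹' A ⊆ Icc (-(1 / 2)) (1 / 2) := fun t ht => by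
    have htx := hAx ht
    constructor <;> nlinarith [htx.1, htx.2]
  rw [sphereMeasure, Measure.restrict_apply (hA.preimage (by fun_prop)), inter_comm, hstrip]
  have h := hausdorffMeasure_sphere_inter_strip_le b j hA'
  rwa [Real.volume_preimage_mul_left hx0.ne', abs_of_pos (by positivity), Fintype.card_fin] at h

lemma hasBoundedMarginalsNearZero_sphereMeasure :
    HasBoundedMarginalsNearZero (sphereMeasure E) := by
  intro x₀ hx₀
  have hx₀' : 0 < ‖x₀‖ := norm_pos_iff.2 hx₀
  refine ⟨stripConst (finrank ℝ E) * (‖x₀‖ / 2)⁻¹.toNNReal, ‖x₀‖ / 4, by positivity, ?_⟩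
  filter_upwards [continuous_norm.continuousAt.eventually_const_lt (half_lt_self hx₀')] with x hx
  have hx0 : x ≠ 0 := norm_pos_iff.1 (by linarith)
  refine Measure.le_iff.2 fun A hA => ?_
  rw [Measure.restrict_apply hA, Measure.map_apply (by fun_prop) (hA.inter measurableSet_Icc)]
  calc sphereMeasure E ((fun ξ => ⟪x, ξ⟫) ⁻¹' (A ∩ Icc (-(‖x₀‖ / 4)) (‖x₀‖ / 4)))
      ≤ stripConst (finrank ℝ E) *
          (ENNReal.ofReal ‖x‖⁻¹ * volume (A ∩ Icc (-(‖x₀‖ / 4)) (‖x₀‖ / 4))) :=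
        sphereMeasure_strip_le hx0 (hA.inter measurableSet_Icc)
          (inter_subset_right.trans (Icc_subset_Icc (by linarith) (by linarith)))
    _ ≤ stripConst (finrank ℝ E) * (ENNReal.ofReal (‖x₀‖ / 2)⁻¹ * volume A) := by
        gcongr
        exact inter_subset_left
    _ = _ := by
        rw [Measure.smul_apply, ENNReal.smul_def, ENNReal.coe_mul, smul_eq_mul, mul_assoc]
        rfl

end SphereMeasure

section SupportFunction

variable {E : Type*} [NormedAddCommGroup E] [InnerProductSpace ℝ E]

/-- `H` is the support function of a centrally symmetric convex body of class `C²₊`. The condition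
on the boundary of the body is expressed through `H`: away from the origin `H` is `C²`, and the
principal radii of curvature, which are the eigenvalues of `d(∇H)_u` on `u^⊥`, are positive. -/
def IsSymmC2PlusSupportFunction [CompleteSpace E] (H : E → ℝ) : Prop :=
  ∃ K : Set E, IsCompact K ∧ Convex ℝ K ∧ (interior K).Nonempty ∧
    (∀ x, x ∈ K ↔ -x ∈ K) ∧
    (∀ x : E, (⨆ y : K, ⟪x, (y : E)⟫) = H x) ∧
    ContDiffOn ℝ 2 H {(0 : E)}ᶜ ∧
    (∀ u : E, ‖u‖ = 1 → ∀ v : E, ⟪u, v⟫ = 0 → v ≠ 0 →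
      0 < ⟪fderiv ℝ (fun x => gradient H x) u v, v⟫)

lemma linearIndependent_pair_of_inner_eq_zero {u v : E} (hu : u ≠ 0) (hv : v ≠ 0)
    (huv : ⟪u, v⟫ = 0) : LinearIndependent ℝ ![u, v] := by
  refine linearIndependent_of_ne_zero_of_inner_eq_zero (𝕜 := ℝ) (fun i => ?_) fun i j hij => ?_
  · fin_cases i
    exacts [hu, hv]
  · fin_cases i <;> fin_cases j <;> simp_all [real_inner_comm]

variable [FiniteDimensional ℝ E] [MeasurableSpace E] [BorelSpace E]

lemma memLp_id_of_isCompact {ν : Measure E} [IsFiniteMeasure ν] {s : Set E} (hs : IsCompact s)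
    (hν : ∀ᵐ ξ ∂ν, ξ ∈ s) (q : ℝ≥0∞) : MemLp id q ν := by
  obtain ⟨C, hC⟩ := isBounded_iff_forall_norm_le.1 hs.isBounded
  exact .of_bound aestronglyMeasurable_id C (hν.mono hC)

theorem isSymmC2PlusSupportFunction_lpCosineNorm {ν : Measure E} [IsFiniteMeasure ν] {s : Set E}
    (hs : IsCompact s) (hν : ∀ᵐ ξ ∂ν, ξ ∈ s) (hB : HasBoundedMarginalsNearZero ν) (hν0 : ν ≠ 0)
    {p : ℝ} (hp : 1 < p) : IsSymmC2PlusSupportFunction (lpCosineNorm ν p) := by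
  let q : Seminorm ℝ E := lpCosineSeminorm hp.le (memLp_id_of_isCompact hs hν _)
  have hq : ∀ x, x ≠ 0 → 0 < q x := fun x hx =>
    Real.rpow_pos_of_pos (lpMoment_pos hs hν hB hν0 (by linarith) hx) _
  refine ⟨dualBody q, isCompact_dualBody, convex_dualBody, nonempty_interior_dualBody hq,
    fun _ => mem_dualBody_iff_neg_mem, iSup_inner_dualBody q,
    contDiffOn_lpCosineNorm hs hν hB hν0 hp, fun u hu v huv hv => ?_⟩
  have hu0 : u ≠ 0 := ne_zero_of_norm_ne_zero (hu ▸ one_ne_zero)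
  exact inner_fderiv_gradient_lpCosineNorm_pos hs hν hB hν0 hp
    (linearIndependent_pair_of_inner_eq_zero hu0 hv huv)

end SupportFunction

section Density

variable {α : Type*} [MeasurableSpace α] {μ : Measure α} {f : α → ℝ}

lemma withDensity_ofReal_le {M : ℝ} (hf : ∀ᵐ ξ ∂μ, f ξ ≤ M) :
    μ.withDensity (fun ξ => ENNReal.ofReal (f ξ)) ≤ M.toNNReal • μ := by
  calc μ.withDensity (fun ξ => ENNReal.ofReal (f ξ))
      ≤ μ.withDensity fun _ => ENNReal.ofReal M :=
        withDensity_mono (hf.mono fun _ => ENNReal.ofReal_le_ofReal)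
    _ = M.toNNReal • μ := withDensity_const _

lemma withDensity_ofReal_ne_zero (hf : AEMeasurable f μ) (hf0 : 0 ≤ᵐ[μ] f)
    (hf_ne : ¬ f =ᵐ[μ] 0) : μ.withDensity (fun ξ => ENNReal.ofReal (f ξ)) ≠ 0 := by
  rw [Ne, withDensity_eq_zero_iff hf.ennreal_ofReal]
  intro h
  refine hf_ne ?_
  filter_upwards [h, hf0] with ξ hξ hξ0
  exact le_antisymm (ENNReal.ofReal_eq_zero.1 hξ) hξ0

lemma integral_withDensity_ofReal (hf : AEMeasurable f μ) (hf0 : 0 ≤ᵐ[μ] f) (g : α → ℝ) :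
    ∫ ξ, g ξ ∂μ.withDensity (fun ξ => ENNReal.ofReal (f ξ)) = ∫ ξ, g ξ * f ξ ∂μ := by
  rw [integral_withDensity_eq_integral_toReal_smul₀ hf.ennreal_ofReal
    (.of_forall fun _ => ENNReal.ofReal_lt_top)]
  refine integral_congr_ae (hf0.mono fun ξ hξ => ?_)
  simp only [ENNReal.toReal_ofReal hξ, smul_eq_mul, mul_comm]

lemma not_ae_eq_zero_of_ae_le [NeZero μ] {c : ℝ} (hc : 0 < c) (hf : ∀ᵐ ξ ∂μ, c ≤ f ξ) :
    ¬ f =ᵐ[μ] 0 := fun h => by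
  obtain ⟨ξ, hξ, hξ0⟩ := (hf.and h).exists
  exact (hc.trans_le hξ).ne' hξ0

end Density

end LpCosine

open LpCosine in
theorem lp_cosine_support_function_C2plus_general {E : Type*} [NormedAddCommGroup E]
    [InnerProductSpace ℝ E] [FiniteDimensional ℝ E] [MeasurableSpace E] [BorelSpace E]
    {p : ℝ} (hp : 1 < p) {f : E → ℝ} (hf : AEMeasurable f (sphereMeasure E)) {M : ℝ}
    (hfM : ∀ᵐ ξ ∂sphereMeasure E, f ξ ≤ M) (hf0 : 0 ≤ᵐ[sphereMeasure E] f)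
    (hf_ne : ¬ f =ᵐ[sphereMeasure E] 0) :
    IsSymmC2PlusSupportFunction fun x =>
      (∫ ξ, |⟪x, ξ⟫| ^ p * f ξ ∂sphereMeasure E) ^ (1 / p) := by
  set ν : Measure E := (sphereMeasure E).withDensity fun ξ => ENNReal.ofReal (f ξ)
  have hνM : ν ≤ M.toNNReal • sphereMeasure E := withDensity_ofReal_le hfM
  have : IsFiniteMeasure ν := isFiniteMeasure_of_le _ hνM
  have hν : ∀ᵐ ξ ∂ν, ξ ∈ sphere (0 : E) 1 :=
    (withDensity_absolutelyContinuous _ _).ae_le ae_mem_sphere_sphereMeasure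
  simp only [← integral_withDensity_ofReal hf hf0]
  exact isSymmC2PlusSupportFunction_lpCosineNorm (isCompact_sphere 0 1) hν
    (hasBoundedMarginalsNearZero_sphereMeasure.mono hνM)
    (withDensity_ofReal_ne_zero hf hf0 hf_ne) hp

theorem lp_cosine_support_function_C2plus (n : ℕ) (hn : 2 ≤ n) (p : ℝ) (hp : 1 < p)
    (hpe : ∀ k : ℕ, p ≠ 2 * k)
    (f : EuclideanSpace ℝ (Fin n) → ℝ) (hf_meas : Measurable f)
    (hf_bdd : ∃ M : ℝ, ∀ ξ, |f ξ| ≤ M)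
    (hf_pos : ∃ c : ℝ, 0 < c ∧
      ∀ᵐ ξ ∂((μH[(n : ℝ) - 1]).restrict (sphere (0 : EuclideanSpace ℝ (Fin n)) 1)), c ≤ f ξ)
    (H : EuclideanSpace ℝ (Fin n) → ℝ)
    (hH : ∀ x, H x = (∫ ξ in sphere (0 : EuclideanSpace ℝ (Fin n)) 1,
      |⟪x, ξ⟫| ^ p * f ξ ∂(μH[(n : ℝ) - 1])) ^ (1 / p)) :
    ∃ K : Set (EuclideanSpace ℝ (Fin n)),
      IsCompact K ∧ Convex ℝ K ∧ (interior K).Nonempty ∧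
      (∀ x, x ∈ K ↔ -x ∈ K) ∧
      (∀ x : EuclideanSpace ℝ (Fin n),
        (⨆ y : K, ⟪x, (y : EuclideanSpace ℝ (Fin n))⟫) = H x) ∧
      ContDiffOn ℝ 2 H {(0 : EuclideanSpace ℝ (Fin n))}ᶜ ∧
      -- all principal radii of curvature are positive: the reverse Weingarten map
      -- d(∇H)_u is positive definite on the tangent space u^⊥, for every unit u
      (∀ u : EuclideanSpace ℝ (Fin n), ‖u‖ = 1 →
        ∀ v : EuclideanSpace ℝ (Fin n), ⟪u, v⟫ = 0 → v ≠ 0 →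
          0 < ⟪fderiv ℝ (fun x => gradient H x) u v, v⟫) := by
  have : NeZero n := ⟨by lia⟩
  obtain ⟨M, hM⟩ := hf_bdd
  obtain ⟨c, hc, hcf⟩ := hf_pos
  simp only [← LpCosine.sphereMeasure_euclideanSpace] at hcf hH
  exact funext hH ▸ lp_cosine_support_function_C2plus_general hp hf_meas.aemeasurable
    (.of_forall fun ξ => (le_abs_self _).trans (hM ξ)) (hcf.mono fun _ => hc.le.trans)
    (LpCosine.not_ae_eq_zero_of_ae_le hc hcf)
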